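/- For integers n ≥ 1 and 0 ≤ t < p ≤ n, the following binomial identity holds: ∑_{s=t+1}^{p} (-1)^{s-t} · C(n,s) · C(s-1,t) · C(n-1-s, p-s) = (-1)^{p-t} · C(n-1,t) - C(n-1,p), where C denotes the ordinary binomial coefficient. -/

import Mathlib

open Polynomial Finset

/-- The Gaussian binomial coefficient as a polynomial in `ℤ[q]`,
defined via the q-Pascal recursion; it is `0` when `b > a`. -/
noncomputable def qbinom : ℕ → ℕ → Polynomial ℤ
  | _, 0 => 1
  | 0, _ + 1 => 0
  | a + 1, b + 1 => X ^ (b + 1) * qbinom a (b + 1) + qbinom a b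

/-- Degree zero case, from Chu-Vandermonde. -/
theorem aux_zero (p k : ℕ) :
    ∑ s ∈ Finset.range (p + 1),
      (-1 : ℤ) ^ s * ((p + k + 1).choose s) * ((p + k - s).choose (p - s)) = (-1) ^ p := by
  have h := Ring.add_choose_eq (R := ℤ) (r := ((p + k + 1 : ℕ) : ℤ)) (s := -((k + 1 : ℕ) : ℤ)) p
    (Commute.all _ _)
  have h1 : ((p + k + 1 : ℕ) : ℤ) + -((k + 1 : ℕ) : ℤ) = (p : ℤ) := by push_cast; ring
  rw [h1, Ring.choose_natCast, Nat.choose_self,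
    Finset.Nat.sum_antidiagonal_eq_sum_range_succ_mk] at h
  have h2 : (-1 : ℤ) ^ p = (-1) ^ p * ((1 : ℕ) : ℤ) := by simp
  rw [h2, h, Finset.mul_sum]
  refine Finset.sum_congr rfl fun s hs => ?_
  have hs' : s ≤ p := by simpa [Nat.lt_succ_iff] using hs
  obtain ⟨q, rfl⟩ := Nat.exists_eq_add_of_le hs'
  have h3 : ((k + 1 : ℕ) : ℤ) + ((q : ℕ) : ℤ) - 1 = ((q + k : ℕ) : ℤ) := by push_cast; ring
  have h4 : s + q + k - s = q + k := by omega
  simp only [Nat.add_sub_cancel_left]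
  rw [Ring.choose_neg, h3, Ring.choose_natCast, Ring.choose_natCast, h4, Units.smul_def,
    Int.coe_negOnePow_natCast, smul_eq_mul, pow_add]
  have h5 : (-1 : ℤ) ^ q * (-1) ^ q = 1 := by rw [← mul_pow]; simp
  linear_combination (-(-1 : ℤ) ^ s * ((s + q + k + 1).choose s) * ((q + k).choose q)) * h5

theorem aux_choose (p k j : ℕ) (hj : j ≤ p) :
    ∑ s ∈ Finset.range (p + 1),
      (-1 : ℤ) ^ s * ((p + k + 1).choose s) * ((p + k - s).choose (p - s)) * (s.choose j)
      = (-1) ^ p * ((p + k + 1).choose j) := by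
  obtain ⟨q, rfl⟩ := Nat.exists_eq_add_of_le hj
  rw [add_assoc j q 1, Finset.sum_range_add, Finset.sum_eq_zero, zero_add, pow_add, mul_assoc,
    ← aux_zero q k, Finset.sum_mul, Finset.mul_sum]
  · refine Finset.sum_congr rfl fun u hu => ?_
    have h1 : j + q + k - (j + u) = q + k - u := by omega
    have h2 : j + q - (j + u) = q - u := by omega
    rw [h1, h2]
    have hu' : u ≤ q := by simpa [Nat.lt_succ_iff] using hu
    have h := Nat.choose_mul (n := j + q + k + 1) (k := j + u) (s := j) (by omega)
    have h3 : j + q + k + 1 - j = q + k + 1 := by omega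
    rw [h3, Nat.add_sub_cancel_left] at h
    have h' : (((j + q + k + 1).choose (j + u) : ℕ) : ℤ) * ((j + u).choose j : ℕ)
      = ((j + q + k + 1).choose j : ℕ) * ((q + k + 1).choose u : ℕ) := by exact_mod_cast h
    rw [pow_add]
    linear_combination ((-1 : ℤ) ^ j * (-1) ^ u * ((q + k - u).choose (q - u))) * h'
  · intro s hs
    rw [Nat.choose_eq_zero_of_lt (Finset.mem_range.mp hs)]
    simp

/-- `gaux t s` is the binomial coefficient of `s - 1` over `t`, with value `(-1)^t` at `s = 0`. -/
def gaux (t : ℕ) : ℕ → ℤ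
  | 0 => (-1) ^ t
  | s + 1 => (s.choose t : ℤ)

theorem gaux_succ (t s : ℕ) : gaux (t + 1) s = (s.choose (t + 1) : ℤ) - gaux t s := by
  cases s with
  | zero => simp [gaux, pow_succ]
  | succ s => simp [gaux, Nat.choose_succ_succ]

theorem gaux_zero (s : ℕ) : gaux 0 s = 1 := by
  cases s <;> simp [gaux]

theorem aux_g (p k t : ℕ) (ht : t ≤ p) :
    ∑ s ∈ Finset.range (p + 1),
      (-1 : ℤ) ^ s * ((p + k + 1).choose s) * ((p + k - s).choose (p - s)) * gaux t s
      = (-1) ^ p * ((p + k).choose t) := by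
  induction t with
  | zero => simpa [gaux_zero] using aux_zero p k
  | succ t ih =>
    simp only [gaux_succ, mul_sub, Finset.sum_sub_distrib]
    rw [ih (by omega), aux_choose p k (t + 1) ht, Nat.choose_succ_succ]
    push_cast
    ring

/-- The key binomial identity (3.8) of the paper. -/
theorem binomial_identity (n p t : ℕ) (hn : 1 ≤ n) (ht : t < p) (hp : p ≤ n) :
    ∑ s ∈ Finset.Icc (t + 1) p,
        (-1 : ℤ) ^ (s - t) * (n.choose s) * ((s - 1).choose t) * ((n - 1 - s).choose (p - s)) =
      (-1 : ℤ) ^ (p - t) * ((n - 1).choose t) - ((n - 1).choose p) := by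
  rcases hp.eq_or_lt with rfl | hlt
  · rw [Finset.sum_eq_single_of_mem p (by simp; omega)]
    · rw [Nat.choose_eq_zero_of_lt (show p - 1 < p by omega)]
      simp
    · intro s hs hne
      rw [Finset.mem_Icc] at hs
      rw [Nat.choose_eq_zero_of_lt (show p - 1 - s < p - s by omega)]
      simp
  · obtain ⟨k, rfl⟩ : ∃ k, n = p + k + 1 := ⟨n - p - 1, by omega⟩
    have h := aux_g p k t ht.le
    obtain ⟨q, rfl⟩ : ∃ q, p = t + q := ⟨p - t, by omega⟩
    have h5 : (-1 : ℤ) ^ t * (-1) ^ t = 1 := by rw [← mul_pow]; simp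
    rw [Finset.sum_range_succ', Finset.sum_range_add, Finset.sum_eq_zero, zero_add] at h
    · rw [← Finset.Ico_add_one_right_eq_Icc, Finset.sum_Ico_eq_sum_range]
      have h6 : t + q + 1 - (t + 1) = q := by omega
      rw [h6]
      simp only [Nat.add_sub_cancel_left, Nat.add_sub_cancel]
      simp only [gaux, pow_zero, Nat.choose_zero_right, Nat.sub_zero] at h
      have h7 : ∀ u ∈ Finset.range q,
          (-1 : ℤ) ^ (t + 1 + u - t) * ((t + q + k + 1).choose (t + 1 + u))
            * ((t + 1 + u - 1).choose t) * ((t + q + k - (t + 1 + u)).choose (t + q - (t + 1 + u)))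
          = (-1) ^ t * ((-1 : ℤ) ^ (t + u + 1) * ((t + q + k + 1).choose (t + u + 1))
            * ((t + q + k - (t + u + 1)).choose (t + q - (t + u + 1))) * ((t + u).choose t)) := by
        intro u _
        have e1 : t + 1 + u - t = u + 1 := by omega
        have e2 : t + 1 + u = t + u + 1 := by omega
        rw [e1, e2, Nat.add_sub_cancel, add_assoc t u 1, pow_add _ t]
        linear_combination (-(-1 : ℤ) ^ (u + 1) * ((t + q + k + 1).choose (t + (u + 1)))
            * ((t + q + k - (t + (u + 1))).choose (t + q - (t + (u + 1)))) * ((t + u).choose t)) * h5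
      rw [Finset.sum_congr rfl h7, ← Finset.mul_sum, eq_sub_of_add_eq h, pow_add]
      push_cast
      linear_combination ((-1 : ℤ) ^ q * ((t + q + k).choose t) - ((t + q + k).choose (t + q))) * h5
    · intro s hs
      simp [gaux, Nat.choose_eq_zero_of_lt (Finset.mem_range.mp hs)]
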